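/- Let r > 0 and let A ⊂ ℝ² be a nonempty r-ball body (i.e., A = X^r for some nonempty X ⊆ ℝ²) with A^r nonempty. Then ℋ¹(frontier A) + ℋ¹(frontier(A^r)) = 2πr. -/

import Mathlib

/-!
Write `B = A^r`; since `A` is an `r`-ball body, also `A = B^r`. For every unit vector `u`, the
point `p` of `A` that is extreme in direction `u` satisfies `p - r • u ∈ B`, and it is the only
point of `A` with this property. Taking `u` of polar angle `θ`, we obtain a closed curve `f` with
values in `A` such that `g θ = f θ - r • u θ` lies in `B`. Since a frontier point of one body is at
distance exactly `r` from some point of the other, `f` sweeps out `frontier A` and `g` sweeps out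
`frontier B`.

Up to the reflection `g ↦ -g`, which preserves length, we are left with two curves `f` and
`r • u - f` whose sum is a circle of radius `r`. Over an arc of normals of angle `δ`, the triangle
inequality bounds the sum of the two lengths below by the chord `2 r sin (δ / 2)`. As all chords of
either curve over this arc make an angle at most `δ / 2` with the direction perpendicular to the
middle normal, that sum is at most `2 r tan (δ / 2)`. Different arcs overlap in null sets, so adding
up over a subdivision into `n` arcs and letting `n → ∞` yields the length of the circle.
-/

open MeasureTheory Metric Real

noncomputable section

/-- The `r`-ball body generated by a set `X ⊆ ℝ²`. -/
def ballBody (r : ℝ) (X : Set (EuclideanSpace ℝ (Fin 2))) :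
    Set (EuclideanSpace ℝ (Fin 2)) :=
  ⋂ x ∈ X, closedBall x r

open Filter Topology
open scoped NNReal ENNReal

/-! ### Hausdorff measure of curves -/

section HausdorffMeasure

lemma edist_le_hausdorffMeasure_of_isPreconnected {X : Type*} [MetricSpace X] [MeasurableSpace X]
    [BorelSpace X] {s : Set X} (hs : IsPreconnected s) {x y : X} (hx : x ∈ s) (hy : y ∈ s) :
    edist x y ≤ μH[1] s := by
  have hlip : LipschitzWith 1 (dist x) := LipschitzWith.dist_right x
  have hsub : Set.Icc 0 (dist x y) ⊆ dist x '' s := by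
    have himage : IsPreconnected (dist x '' s) := hs.image _ hlip.continuous.continuousOn
    exact himage.Icc_subset ⟨x, hx, dist_self x⟩ ⟨y, hy, rfl⟩
  calc edist x y = μH[1] (Set.Icc 0 (dist x y)) := by
        rw [hausdorffMeasure_real, Real.volume_Icc, sub_zero, edist_dist]
    _ ≤ μH[1] (dist x '' s) := measure_mono hsub
    _ ≤ μH[1] s := by simpa using hlip.hausdorffMeasure_image_le zero_le_one s

lemma hausdorffMeasure_le_of_antilipschitzWith_domRestrict {X Y : Type*} [EMetricSpace X]
    [MeasurableSpace X] [BorelSpace X] [EMetricSpace Y] [MeasurableSpace Y] [BorelSpace Y]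
    {s : Set X} {g : X → Y} {K : ℝ≥0} (hg : AntilipschitzWith K (s.domRestrict g)) {d : ℝ}
    (hd : 0 ≤ d) : μH[d] s ≤ (K : ℝ≥0∞) ^ d * μH[d] (g '' s) := by
  have h := hg.le_hausdorffMeasure_image hd Set.univ
  rwa [← isometry_subtype_coe.hausdorffMeasure_image (Or.inl hd), Set.image_univ,
    Subtype.range_coe, Set.image_univ, Set.range_domRestrict] at h

lemma hausdorffMeasure_image_Icc_le {X : Type*} [MetricSpace X] [MeasurableSpace X] [BorelSpace X]
    {f : ℝ → X} {p : X → ℝ} {a b c : ℝ} (hc : 0 < c)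
    (h : ∀ x ∈ Set.Icc a b, ∀ y ∈ Set.Icc a b, x ≤ y →
      c * dist (f x) (f y) ≤ p (f y) - p (f x)) :
    μH[1] (f '' Set.Icc a b) ≤ ENNReal.ofReal ((p (f b) - p (f a)) / c) := by
  have hmono : MonotoneOn (p ∘ f) (Set.Icc a b) := fun x hx y hy hxy =>
    sub_nonneg.1 ((mul_nonneg hc.le dist_nonneg).trans (h x hx y hy hxy))
  have hanti : AntilipschitzWith c⁻¹.toNNReal ((f '' Set.Icc a b).domRestrict p) := by
    refine AntilipschitzWith.of_le_mul_dist ?_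
    rintro ⟨_, x, hx, rfl⟩ ⟨_, y, hy, rfl⟩
    rw [Real.coe_toNNReal _ (inv_nonneg.2 hc.le), inv_mul_eq_div, le_div_iff₀' hc,
      Subtype.dist_eq, Real.dist_eq]
    rcases le_total x y with hxy | hyx
    · rw [abs_sub_comm]
      exact (h x hx y hy hxy).trans (le_abs_self _)
    · rw [dist_comm]
      exact (h y hy x hx hyx).trans (le_abs_self _)
  have himage : p '' (f '' Set.Icc a b) ⊆ Set.Icc (p (f a)) (p (f b)) := by
    rw [← Set.image_comp]
    exact hmono.mapsTo_Icc.image_subset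
  calc μH[1] (f '' Set.Icc a b)
      ≤ ENNReal.ofReal c⁻¹ * volume (p '' (f '' Set.Icc a b)) := by
        simpa [hausdorffMeasure_real, ENNReal.ofReal] using
          hausdorffMeasure_le_of_antilipschitzWith_domRestrict hanti zero_le_one
    _ ≤ ENNReal.ofReal c⁻¹ * volume (Set.Icc (p (f a)) (p (f b))) := by gcongr
    _ = ENNReal.ofReal ((p (f b) - p (f a)) / c) := by
        rw [Real.volume_Icc, ← ENNReal.ofReal_mul (inv_nonneg.2 hc.le), inv_mul_eq_div]

end HausdorffMeasure

/-! ### Dual ball bodies -/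

/-- The sets `A` and `B` are `r`-dual, that is, `A = B^r` and `B = A^r`. -/
structure IsBallDual {E : Type*} [PseudoMetricSpace E] (r : ℝ) (A B : Set E) : Prop where
  eq_left : A = ⋂ b ∈ B, closedBall b r
  eq_right : B = ⋂ a ∈ A, closedBall a r

lemma isBallDual_biInter_closedBall {E : Type*} [PseudoMetricSpace E] (r : ℝ) (X : Set E) :
    IsBallDual r (⋂ x ∈ X, closedBall x r) (⋂ a ∈ ⋂ x ∈ X, closedBall x r, closedBall a r) := by
  refine ⟨Set.Subset.antisymm ?_ ?_, rfl⟩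
  · exact fun a ha => Set.mem_iInter₂.2 fun b hb =>
      mem_closedBall_comm.1 (Set.mem_iInter₂.1 hb a ha)
  · refine fun a ha => Set.mem_iInter₂.2 fun x hx => Set.mem_iInter₂.1 ha x ?_
    exact Set.mem_iInter₂.2 fun y hy => mem_closedBall_comm.1 (Set.mem_iInter₂.1 hy x hx)

lemma frontier_biInter_closedBall {E : Type*} [NormedAddCommGroup E] [NormedSpace ℝ E] {r : ℝ}
    (hr : r ≠ 0) {B : Set E} (hB : IsCompact B) (hBne : B.Nonempty) :
    frontier (⋂ b ∈ B, closedBall b r)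
      = {p ∈ ⋂ b ∈ B, closedBall b r | ∃ b ∈ B, dist p b = r} := by
  have hclosed : IsClosed (⋂ b ∈ B, closedBall b r) :=
    isClosed_biInter fun _ _ => isClosed_closedBall
  rw [hclosed.frontier_eq]
  ext p
  refine and_congr_right fun hp => ⟨fun hpi => ?_, fun ⟨b, hb, hpb⟩ hpi => ?_⟩
  · obtain ⟨b, hb, hmax⟩ := hB.exists_isMaxOn hBne (f := dist p) (by fun_prop)
    refine ⟨b, hb, le_antisymm (Set.mem_iInter₂.1 hp b hb) ?_⟩
    by_contra! hlt
    refine hpi <| mem_interior_iff_mem_nhds.2 <|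
      mem_of_superset (ball_mem_nhds p (sub_pos.2 hlt)) fun q hq =>
        Set.mem_iInter₂.2 fun x hx => ?_
    rw [mem_ball] at hq
    rw [mem_closedBall]
    linarith [dist_triangle q p x, isMaxOn_iff.1 hmax x hx]
  · have hball := interior_mono (Set.biInter_subset_of_mem hb) hpi
    rw [interior_closedBall b hr, mem_ball] at hball
    exact hball.ne hpb

section InnerProductSpace

variable {E : Type*} [NormedAddCommGroup E] [InnerProductSpace ℝ E] {r : ℝ}

lemma norm_add_smul_le_iff (hr : 0 ≤ r) {u : E} (hu : ‖u‖ = 1) (x : E) :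
    ‖x + r • u‖ ≤ r ↔ ‖x‖ ^ 2 ≤ -(2 * r * inner ℝ x u) := by
  rw [← sq_le_sq₀ (norm_nonneg _) hr, norm_add_sq_real, inner_smul_right, norm_smul, hu,
    norm_eq_abs, mul_one, sq_abs]
  constructor <;> intro h <;> linarith

/-- A quantitative form of the strict convexity of balls of radius `r`: along the chord from `x` to
`x + w` the slack grows at rate `‖w‖ ^ 2`, which leaves room to drift in a direction `u`. -/
lemma exists_pos_forall_norm_add_smul_le {w u : E} (hu : ‖u‖ ≤ 1) {μ : ℝ} (hμ : 0 ≤ μ)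
    (hw : 2 * r * μ < ‖w‖ ^ 2) :
    ∃ s : ℝ, 0 < s ∧ ∀ x : E, ‖x‖ ≤ r → ‖x + w‖ ≤ r → ‖x + s • (w + μ • u)‖ ≤ r := by
  set v := w + μ • u with hv
  obtain ⟨s, hs0, hs1, hsv⟩ : ∃ s : ℝ, 0 < s ∧ s ≤ 1 ∧ s * ‖v‖ ^ 2 ≤ ‖w‖ ^ 2 - 2 * r * μ := by
    have hden : 0 < ‖v‖ ^ 2 + 1 := by positivity
    refine ⟨min 1 ((‖w‖ ^ 2 - 2 * r * μ) / (‖v‖ ^ 2 + 1)),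
      lt_min one_pos (div_pos (sub_pos.2 hw) hden), min_le_left _ _, ?_⟩
    have hs := (le_div_iff₀ hden).1 (min_le_right 1 ((‖w‖ ^ 2 - 2 * r * μ) / (‖v‖ ^ 2 + 1)))
    nlinarith [le_min zero_le_one (div_pos (sub_pos.2 hw) hden).le]
  refine ⟨s, hs0, fun x hx hxw => ?_⟩
  have hr : 0 ≤ r := (norm_nonneg x).trans hx
  have hxv : 2 * inner ℝ x v ≤ r ^ 2 - ‖x‖ ^ 2 - ‖w‖ ^ 2 + 2 * r * μ := by
    have hxw' : ‖x + w‖ ^ 2 ≤ r ^ 2 := pow_le_pow_left₀ (norm_nonneg _) hxw 2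
    have hxu : inner ℝ x u ≤ r := (real_inner_le_norm x u).trans <|
      (mul_le_of_le_one_right (norm_nonneg x) hu).trans hx
    rw [norm_add_sq_real] at hxw'
    rw [hv, inner_add_right, inner_smul_right]
    nlinarith
  rw [← sq_le_sq₀ (norm_nonneg _) hr]
  calc ‖x + s • v‖ ^ 2 = ‖x‖ ^ 2 + s * (2 * inner ℝ x v) + s * (s * ‖v‖ ^ 2) := by
        rw [norm_add_sq_real, inner_smul_right, norm_smul, norm_eq_abs, mul_pow, sq_abs]
        ring
    _ ≤ ‖x‖ ^ 2 + s * (r ^ 2 - ‖x‖ ^ 2 - ‖w‖ ^ 2 + 2 * r * μ) + s * (‖w‖ ^ 2 - 2 * r * μ) := by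
        gcongr
    _ = r ^ 2 - (1 - s) * (r ^ 2 - ‖x‖ ^ 2) := by ring
    _ ≤ r ^ 2 := sub_le_self _ <| mul_nonneg (sub_nonneg.2 hs1) <|
        sub_nonneg.2 (pow_le_pow_left₀ (norm_nonneg x) hx 2)

/-- A ball body lies in the ball of radius `r` that touches it at a support point: otherwise, from a
point `q` outside that ball, a move from the support point towards `q` could be tilted so as to
stay in the body and increase `⟪·, u⟫`. -/
lemma mem_closedBall_sub_smul_of_isMaxOn_inner (hr : 0 < r) {B : Set E} {p q u : E} (hu : ‖u‖ = 1)
    (hp : p ∈ ⋂ b ∈ B, closedBall b r) (hq : q ∈ ⋂ b ∈ B, closedBall b r)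
    (hmax : IsMaxOn (fun x => inner ℝ x u) (⋂ b ∈ B, closedBall b r) p) :
    q ∈ closedBall (p - r • u) r := by
  rw [mem_closedBall, dist_eq_norm, sub_sub_eq_add_sub, add_sub_right_comm,
    norm_add_smul_le_iff hr.le hu]
  set w := q - p with hw
  by_contra! hlt
  have hwu : inner ℝ w u ≤ 0 := by
    rw [hw, inner_sub_left]
    exact sub_nonpos.2 (hmax hq)
  obtain ⟨μ, hwμ, hμw⟩ : ∃ μ, -inner ℝ w u < μ ∧ μ < ‖w‖ ^ 2 / (2 * r) :=
    exists_between (by rw [lt_div_iff₀ (by positivity)]; linarith)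
  rw [lt_div_iff₀' (by positivity)] at hμw
  obtain ⟨s, hs, hball⟩ :=
    exists_pos_forall_norm_add_smul_le hu.le (by linarith : 0 ≤ μ) hμw
  have hmem : p + s • (w + μ • u) ∈ ⋂ b ∈ B, closedBall b r := by
    refine Set.mem_iInter₂.2 fun b hb => ?_
    have hpb := Set.mem_iInter₂.1 hp b hb
    have hqb := Set.mem_iInter₂.1 hq b hb
    rw [mem_closedBall, dist_eq_norm] at hpb hqb ⊢
    rw [add_sub_right_comm]
    exact hball _ hpb (by rwa [hw, sub_add_sub_cancel'])
  have hle : inner ℝ (p + s • (w + μ • u)) u ≤ inner ℝ p u := hmax hmem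
  rw [inner_add_left, real_inner_smul_left, inner_add_left, real_inner_smul_left,
    real_inner_self_eq_norm_sq, hu] at hle
  nlinarith

/-! ### Families of points with tangent balls -/

/-- For every `j`, the points `f i` all lie in the ball of radius `r` that has `f j` on its boundary
with outer normal `u j`. For `u` a parametrisation of the unit sphere, this says that `f` is the
inverse of the Gauss map of a convex body whose radii of curvature are at most `r`. -/
def HasTangentBalls {ι : Type*} (r : ℝ) (u f : ι → E) : Prop :=
  ∀ i j, f i ∈ closedBall (f j - r • u j) r

namespace HasTangentBalls

variable {ι : Type*} {u f : ι → E}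

lemma complement (h : HasTangentBalls r u f) : HasTangentBalls r u fun i => r • u i - f i := by
  intro i j
  have hji := h j i
  rw [mem_closedBall, dist_eq_norm] at hji ⊢
  rwa [show r • u i - f i - (r • u j - f j - r • u j) = f j - (f i - r • u i) by abel]

lemma norm_sub_sq_le (h : HasTangentBalls r u f) (hr : 0 ≤ r) (hu : ∀ i, ‖u i‖ = 1) (i j : ι) :
    ‖f i - f j‖ ^ 2 ≤ 2 * r * inner ℝ (f i - f j) (u i) := by
  have hji := h j i
  rw [mem_closedBall, dist_eq_norm, sub_sub_eq_add_sub, add_sub_right_comm,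
    norm_add_smul_le_iff hr (hu i), ← neg_sub, norm_neg, inner_neg_left] at hji
  linarith

lemma inner_sub_nonneg (h : HasTangentBalls r u f) (hr : 0 < r) (hu : ∀ i, ‖u i‖ = 1) (i j : ι) :
    0 ≤ inner ℝ (f i - f j) (u i) :=
  nonneg_of_mul_nonneg_right ((sq_nonneg _).trans (h.norm_sub_sq_le hr.le hu i j)) (by positivity)

lemma norm_sub_le (h : HasTangentBalls r u f) (hr : 0 ≤ r) (hu : ∀ i, ‖u i‖ = 1) (i j : ι) :
    ‖f i - f j‖ ≤ r * ‖u i - u j‖ := by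
  have hij := h.norm_sub_sq_le hr hu i j
  have hji := h.norm_sub_sq_le hr hu j i
  have hcs := real_inner_le_norm (f i - f j) (u i - u j)
  rw [← neg_sub, norm_neg, inner_neg_left] at hji
  rw [inner_sub_right] at hcs
  rcases (norm_nonneg (f i - f j)).eq_or_lt with h0 | hpos
  · rw [← h0]
    positivity
  · refine le_of_mul_le_mul_left ?_ hpos
    nlinarith

lemma continuous [TopologicalSpace ι] (h : HasTangentBalls r u f) (hr : 0 ≤ r)
    (hu : ∀ i, ‖u i‖ = 1) (hcont : Continuous u) : Continuous f := by
  refine continuous_iff_continuousAt.2 fun j => tendsto_iff_norm_sub_tendsto_zero.2 ?_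
  refine squeeze_zero (fun _ => norm_nonneg _) (fun i => h.norm_sub_le hr hu i j) ?_
  have hlim : Continuous fun i => r * ‖u i - u j‖ := by fun_prop
  simpa using hlim.tendsto j

lemma eq_of_normal_eq (h : HasTangentBalls r u f) (hr : 0 ≤ r) (hu : ∀ i, ‖u i‖ = 1) {i j : ι}
    (hij : u i = u j) : f i = f j := by
  simpa [hij, sub_eq_zero] using h.norm_sub_le hr hu i j

/-- The normals at a given point form a cone. -/
lemma eq_of_smul_normal_eq (h : HasTangentBalls r u f) (hr : 0 ≤ r) (hu : ∀ i, ‖u i‖ = 1)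
    {i j k : ι} (hij : f i = f j) {c s t : ℝ} (hc : 0 ≤ c) (hs : 0 < s) (ht : 0 ≤ t)
    (huk : c • u k = s • u i + t • u j) : f i = f k := by
  have hik := h.norm_sub_sq_le hr hu i k
  have hjk := h.norm_sub_sq_le hr hu j k
  have hki := h.norm_sub_sq_le hr hu k i
  rw [← hij] at hjk
  rw [← neg_sub, norm_neg, inner_neg_left] at hki
  have hinner : c * inner ℝ (f i - f k) (u k)
      = s * inner ℝ (f i - f k) (u i) + t * inner ℝ (f i - f k) (u j) := by
    simp only [← inner_smul_right, ← inner_add_right, huk]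
  have hsum : (s + t + c) * ‖f i - f k‖ ^ 2 ≤ 0 := by
    nlinarith [mul_le_mul_of_nonneg_left hik hs.le, mul_le_mul_of_nonneg_left hjk ht,
      mul_le_mul_of_nonneg_left hki hc]
  have hsq : ‖f i - f k‖ ^ 2 ≤ 0 := nonpos_of_mul_nonpos_right hsum (by positivity)
  simpa [sub_eq_zero] using hsq.antisymm (sq_nonneg _)

end HasTangentBalls

namespace IsBallDual

section PseudoMetricSpace

variable {F : Type*} [PseudoMetricSpace F] {A B : Set F}

lemma symm (h : IsBallDual r A B) : IsBallDual r B A := ⟨h.eq_right, h.eq_left⟩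

lemma dist_le (h : IsBallDual r A B) {a b : F} (ha : a ∈ A) (hb : b ∈ B) : dist a b ≤ r := by
  rw [h.eq_left] at ha
  exact Set.mem_iInter₂.1 ha b hb

lemma isCompact_left [ProperSpace F] (h : IsBallDual r A B) (hB : B.Nonempty) : IsCompact A := by
  obtain ⟨b, hb⟩ := hB
  rw [h.eq_left]
  exact (isCompact_closedBall b r).of_isClosed_subset
    (isClosed_biInter fun _ _ => isClosed_closedBall) (Set.biInter_subset_of_mem hb)

end PseudoMetricSpace

variable {A B : Set E}

lemma exists_mem_sub_smul_mem (h : IsBallDual r A B) (hr : 0 < r) (hA : IsCompact A)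
    (hAne : A.Nonempty) {u : E} (hu : ‖u‖ = 1) : ∃ p ∈ A, p - r • u ∈ B := by
  obtain ⟨p, hp, hmax⟩ := hA.exists_isMaxOn hAne (f := fun x => inner ℝ x u) (by fun_prop)
  refine ⟨p, hp, ?_⟩
  rw [h.eq_right]
  refine Set.mem_iInter₂.2 fun q hq => mem_closedBall_comm.1 ?_
  rw [h.eq_left] at hp hq hmax
  exact mem_closedBall_sub_smul_of_isMaxOn_inner hr hu hp hq hmax

lemma hasTangentBalls (h : IsBallDual r A B) {ι : Type*} {u f : ι → E} (hfA : ∀ i, f i ∈ A)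
    (hfB : ∀ i, f i - r • u i ∈ B) : HasTangentBalls r u f :=
  fun i j => h.dist_le (hfA i) (hfB j)

lemma eq_of_sub_smul_mem (h : IsBallDual r A B) (hr : 0 ≤ r) {p q u : E} (hu : ‖u‖ = 1)
    (hp : p ∈ A) (hpB : p - r • u ∈ B) (hq : q ∈ A) (hqB : q - r • u ∈ B) : p = q := by
  have hballs : HasTangentBalls r (fun _ => u) ((↑) : {x // x ∈ A ∧ x - r • u ∈ B} → E) :=
    h.hasTangentBalls (fun x => x.2.1) fun x => x.2.2
  exact hballs.eq_of_normal_eq hr (fun _ => hu) (i := ⟨p, hp, hpB⟩) (j := ⟨q, hq, hqB⟩) rfl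

/-- `f i` is the boundary point of `A` with outer normal `u i`. -/
lemma frontier_left_eq_range (h : IsBallDual r A B) (hr : 0 < r) (hB : IsCompact B)
    (hBne : B.Nonempty) {ι : Type*} {u f : ι → E} (hu : Set.range u = sphere 0 1)
    (hfA : ∀ i, f i ∈ A) (hfB : ∀ i, f i - r • u i ∈ B) : frontier A = Set.range f := by
  have hu1 : ∀ i, ‖u i‖ = 1 := fun i => mem_sphere_zero_iff_norm.1 (hu ▸ Set.mem_range_self i)
  have hfrontier : frontier A = {p ∈ A | ∃ b ∈ B, dist p b = r} := by
    rw [h.eq_left]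
    exact frontier_biInter_closedBall hr.ne' hB hBne
  rw [hfrontier]
  refine Set.Subset.antisymm ?_ ?_
  · rintro p ⟨hp, b, hb, hpb⟩
    obtain ⟨i, hi⟩ : r⁻¹ • (p - b) ∈ Set.range u := by
      rw [hu, mem_sphere_zero_iff_norm, norm_smul, ← dist_eq_norm, hpb, norm_inv,
        norm_of_nonneg hr.le, inv_mul_cancel₀ hr.ne']
    refine ⟨i, h.eq_of_sub_smul_mem hr.le (hu1 i) (hfA i) (hfB i) hp ?_⟩
    rwa [hi, smul_inv_smul₀ hr.ne', sub_sub_cancel]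
  · rintro _ ⟨i, rfl⟩
    refine ⟨hfA i, _, hfB i, ?_⟩
    rw [dist_eq_norm, sub_sub_cancel, norm_smul, hu1, mul_one, norm_of_nonneg hr.le]

lemma frontier_right_eq_range (h : IsBallDual r A B) (hr : 0 < r) (hA : IsCompact A)
    (hAne : A.Nonempty) {ι : Type*} {u f : ι → E} (hu : Set.range u = sphere 0 1)
    (hfA : ∀ i, f i ∈ A) (hfB : ∀ i, f i - r • u i ∈ B) :
    frontier B = Set.range fun i => f i - r • u i := by
  refine h.symm.frontier_left_eq_range (u := fun i => -u i) hr hA hAne ?_ hfB fun i => ?_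
  · rw [← neg_zero, ← neg_sphere, ← hu, ← Set.image_neg_eq_neg, ← Set.range_comp]
    rfl
  · simpa using hfA i

end IsBallDual

end InnerProductSpace

/-! ### Curves in the plane -/

/-- The unit vector of the plane with polar angle `θ`. -/
def unitVec (θ : ℝ) : EuclideanSpace ℝ (Fin 2) := !₂[cos θ, sin θ]

lemma inner_unitVec_unitVec (α β : ℝ) : inner ℝ (unitVec α) (unitVec β) = cos (α - β) := by
  simp [unitVec, PiLp.inner_apply, Fin.sum_univ_two, cos_sub, mul_comm]

lemma norm_unitVec (θ : ℝ) : ‖unitVec θ‖ = 1 := by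
  rw [norm_eq_sqrt_real_inner, inner_unitVec_unitVec, sub_self, cos_zero, sqrt_one]

lemma continuous_unitVec : Continuous unitVec := by
  unfold unitVec
  fun_prop

lemma unitVec_add_two_pi (θ : ℝ) : unitVec (θ + 2 * π) = unitVec θ := by
  simp [unitVec]

lemma range_unitVec : Set.range unitVec = sphere 0 1 := by
  refine Set.Subset.antisymm ?_ fun x hx => ?_
  · rintro _ ⟨θ, rfl⟩
    exact mem_sphere_zero_iff_norm.2 (norm_unitVec θ)
  · obtain ⟨z, rfl⟩ := Complex.orthonormalBasisOneI.repr.surjective x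
    rw [mem_sphere_zero_iff_norm, LinearIsometryEquiv.norm_map, Complex.norm_eq_one_iff] at hx
    obtain ⟨θ, rfl⟩ := hx
    refine ⟨θ, ?_⟩
    ext i
    fin_cases i <;> simp [unitVec, Complex.exp_ofReal_mul_I_re, Complex.exp_ofReal_mul_I_im]

lemma sin_sub_smul_unitVec (α β θ : ℝ) :
    sin (β - α) • unitVec θ = sin (β - θ) • unitVec α + sin (θ - α) • unitVec β := by
  ext i
  fin_cases i <;> simp [unitVec, sin_sub] <;> ring

/-- The expansion of `x` in the basis dual, up to scaling, to `unitVec β`, `unitVec α`. -/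
lemma sin_sub_smul_eq_sub_inner_smul (α β : ℝ) (x : EuclideanSpace ℝ (Fin 2)) :
    sin (β - α) • x = inner ℝ x (unitVec β) • unitVec (α + π / 2)
      - inner ℝ x (unitVec α) • unitVec (β + π / 2) := by
  ext i
  fin_cases i <;>
    simp [unitVec, PiLp.inner_apply, Fin.sum_univ_two, sin_sub, cos_add_pi_div_two,
      sin_add_pi_div_two] <;> ring

lemma inner_unitVec_sub_unitVec (a b : ℝ) :
    inner ℝ (unitVec b - unitVec a) (unitVec ((a + b) / 2 + π / 2)) = 2 * sin ((b - a) / 2) := by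
  rw [inner_sub_left, inner_unitVec_unitVec, inner_unitVec_unitVec, ← sub_sub, ← sub_sub,
    cos_sub_pi_div_two, cos_sub_pi_div_two, show b - (a + b) / 2 = (b - a) / 2 by ring,
    show a - (a + b) / 2 = -((b - a) / 2) by ring, sin_neg]
  ring

lemma cos_mul_norm_le_inner {α β θ η : ℝ} {x : EuclideanSpace ℝ (Fin 2)}
    (hα : inner ℝ x (unitVec α) ≤ 0) (hβ : 0 ≤ inner ℝ x (unitVec β)) (hsin : 0 < sin (β - α))
    (hηα : cos η ≤ cos (α - θ)) (hηβ : cos η ≤ cos (β - θ)) (hη : 0 ≤ cos η) :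
    cos η * ‖x‖ ≤ inner ℝ x (unitVec (θ + π / 2)) := by
  obtain ⟨P, hP⟩ : ∃ P, P = inner ℝ x (unitVec β) := ⟨_, rfl⟩
  obtain ⟨Q, hQ⟩ : ∃ Q, Q = -inner ℝ x (unitVec α) := ⟨_, rfl⟩
  have hP0 : 0 ≤ P := hP ▸ hβ
  have hQ0 : 0 ≤ Q := hQ ▸ neg_nonneg.2 hα
  have hx : sin (β - α) • x = P • unitVec (α + π / 2) + Q • unitVec (β + π / 2) := by
    rw [sin_sub_smul_eq_sub_inner_smul, hP, hQ, neg_smul, sub_eq_add_neg]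
  have hnorm : sin (β - α) * ‖x‖ ≤ P + Q := by
    rw [← norm_of_nonneg hsin.le, ← norm_smul, hx]
    refine (norm_add_le _ _).trans_eq ?_
    rw [norm_smul, norm_smul, norm_unitVec, norm_unitVec, mul_one, mul_one, norm_of_nonneg hP0,
      norm_of_nonneg hQ0]
  have hinner : sin (β - α) * inner ℝ x (unitVec (θ + π / 2))
      = P * cos (α - θ) + Q * cos (β - θ) := by
    rw [← real_inner_smul_left, hx, inner_add_left, real_inner_smul_left, real_inner_smul_left,
      inner_unitVec_unitVec, inner_unitVec_unitVec, add_sub_add_right_eq_sub,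
      add_sub_add_right_eq_sub]
  refine le_of_mul_le_mul_left ?_ hsin
  calc sin (β - α) * (cos η * ‖x‖) = cos η * (sin (β - α) * ‖x‖) := by ring
    _ ≤ cos η * (P + Q) := by gcongr
    _ = P * cos η + Q * cos η := by ring
    _ ≤ P * cos (α - θ) + Q * cos (β - θ) := by gcongr
    _ = sin (β - α) * inner ℝ x (unitVec (θ + π / 2)) := hinner.symm

lemma tendsto_nat_mul_comp_div {φ : ℝ → ℝ} {φ' : ℝ} (hφ : HasDerivAt φ φ' 0) (h0 : φ 0 = 0)
    (x : ℝ) : Tendsto (fun n : ℕ => n * φ (x / n)) atTop (𝓝 (x * φ')) := by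
  simpa [h0, div_eq_inv_mul, Function.comp_def] using
    (hφ.hasFDerivAt.lim_real x).comp tendsto_natCast_atTop_atTop

namespace HasTangentBalls

variable {r : ℝ} {f : ℝ → EuclideanSpace ℝ (Fin 2)}

lemma image_Icc_zero_two_pi (hf : HasTangentBalls r unitVec f) (hr : 0 ≤ r) :
    f '' Set.Icc 0 (2 * π) = Set.range f := by
  have hper : Function.Periodic f (2 * π) := fun θ =>
    hf.eq_of_normal_eq hr norm_unitVec (unitVec_add_two_pi θ)
  simpa using hper.image_Icc two_pi_pos 0

lemma eq_of_mem_Icc (hf : HasTangentBalls r unitVec f) (hr : 0 ≤ r) {a b θ : ℝ} (hab : b - a ≤ π)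
    (hθ : θ ∈ Set.Icc a b) (h : f a = f b) : f a = f θ := by
  rcases hθ.1.eq_or_lt with rfl | haθ
  · rfl
  rcases hθ.2.eq_or_lt with rfl | hθb
  · exact h
  exact hf.eq_of_smul_normal_eq hr norm_unitVec h
    (sin_nonneg_of_nonneg_of_le_pi (by linarith) hab)
    (sin_pos_of_pos_of_lt_pi (by linarith) (by linarith))
    (sin_nonneg_of_nonneg_of_le_pi (by linarith) (by linarith)) (sin_sub_smul_unitVec a b θ)

lemma image_Icc_inter_image_Icc_subset (hf : HasTangentBalls r unitVec f) (hr : 0 ≤ r) {a b c : ℝ}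
    (hca : c ≤ a + 2 * π) : f '' Set.Icc a b ∩ f '' Set.Icc b c ⊆ {f b, f c} := by
  rintro _ ⟨⟨α, hα, rfl⟩, β, hβ, hαβ⟩
  rcases le_total (β - α) π with hle | hge
  · exact Or.inl (hf.eq_of_mem_Icc hr hle ⟨hα.2, hβ.1⟩ hαβ.symm)
  · -- the complementary arc, from `β` to `α + 2 * π`, passes through `c`
    have hper : f (α + 2 * π) = f α := hf.eq_of_normal_eq hr norm_unitVec (unitVec_add_two_pi α)
    have hβc : f β = f c := hf.eq_of_mem_Icc (b := α + 2 * π) hr (by linarith)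
      ⟨hβ.2, by linarith [hα.1]⟩ (hαβ.trans hper.symm)
    exact Or.inr (hαβ.symm.trans hβc)

lemma hausdorffMeasure_image_Icc_add (hf : HasTangentBalls r unitVec f) (hr : 0 ≤ r) {a b c : ℝ}
    (hab : a ≤ b) (hbc : b ≤ c) (hca : c ≤ a + 2 * π) :
    μH[1] (f '' Set.Icc a b) + μH[1] (f '' Set.Icc b c) = μH[1] (f '' Set.Icc a c) := by
  have hmeas : MeasurableSet (f '' Set.Icc b c) :=
    (isCompact_Icc.image (hf.continuous hr norm_unitVec continuous_unitVec)).measurableSet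
  have hdisj : AEDisjoint μH[1] (f '' Set.Icc a b) (f '' Set.Icc b c) := by
    have := Measure.nullSingletonClass_hausdorff (EuclideanSpace ℝ (Fin 2)) one_pos
    exact measure_mono_null (hf.image_Icc_inter_image_Icc_subset hr hca)
      ((Set.toFinite _).measure_zero _)
  rw [← measure_union₀ hmeas.nullMeasurableSet hdisj, ← Set.image_union,
    Set.Icc_union_Icc_eq_Icc hab hbc]

lemma sum_hausdorffMeasure_image_Icc (hf : HasTangentBalls r unitVec f) (hr : 0 ≤ r) {t : ℕ → ℝ}
    (ht : Monotone t) (n : ℕ) (hn : t n ≤ t 0 + 2 * π) :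
    ∑ k ∈ Finset.range n, μH[1] (f '' Set.Icc (t k) (t (k + 1)))
      = μH[1] (f '' Set.Icc (t 0) (t n)) := by
  induction n with
  | zero =>
    have := Measure.nullSingletonClass_hausdorff (EuclideanSpace ℝ (Fin 2)) one_pos
    simp
  | succ n ih =>
    rw [Finset.sum_range_succ, ih ((ht n.le_succ).trans hn),
      hf.hausdorffMeasure_image_Icc_add hr (ht n.zero_le) (ht n.le_succ) hn]

lemma cos_mul_dist_le_inner_sub (hf : HasTangentBalls r unitVec f) (hr : 0 < r) {a b α β : ℝ}
    (hab : b - a < π) (hα : a ≤ α) (hαβ : α ≤ β) (hβ : β ≤ b) :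
    cos ((b - a) / 2) * dist (f α) (f β)
      ≤ inner ℝ (f β) (unitVec ((a + b) / 2 + π / 2))
        - inner ℝ (f α) (unitVec ((a + b) / 2 + π / 2)) := by
  rcases hαβ.eq_or_lt with rfl | hlt
  · simp
  have hcos : ∀ γ ∈ Set.Icc a b, cos ((b - a) / 2) ≤ cos (γ - (a + b) / 2) := by
    intro γ hγ
    rw [← cos_abs (γ - _)]
    refine cos_le_cos_of_nonneg_of_le_pi (abs_nonneg _) (by linarith) ?_
    exact abs_le.2 ⟨by linarith [hγ.1], by linarith [hγ.2]⟩
  have hαle : inner ℝ (f β - f α) (unitVec α) ≤ 0 := by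
    have := hf.inner_sub_nonneg hr norm_unitVec α β
    rwa [← neg_sub, inner_neg_left, neg_nonneg] at this
  rw [dist_comm, dist_eq_norm, ← inner_sub_left]
  exact cos_mul_norm_le_inner hαle (hf.inner_sub_nonneg hr norm_unitVec β α)
    (sin_pos_of_pos_of_lt_pi (by linarith) (by linarith)) (hcos α ⟨hα, hαβ.trans hβ⟩)
    (hcos β ⟨hα.trans hαβ, hβ⟩) (cos_nonneg_of_mem_Icc ⟨by linarith, by linarith⟩)

lemma inner_sub_unitVec_nonneg (hf : HasTangentBalls r unitVec f) (hr : 0 < r) {a b : ℝ}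
    (hab : a ≤ b) (hba : b - a < π) :
    0 ≤ inner ℝ (f b - f a) (unitVec ((a + b) / 2 + π / 2)) := by
  rw [inner_sub_left]
  have hcos : 0 ≤ cos ((b - a) / 2) := cos_nonneg_of_mem_Icc ⟨by linarith, by linarith⟩
  exact (mul_nonneg hcos dist_nonneg).trans
    (hf.cos_mul_dist_le_inner_sub hr hba le_rfl hab le_rfl)

lemma hausdorffMeasure_image_Icc_le_inner_div_cos (hf : HasTangentBalls r unitVec f) (hr : 0 < r)
    {a b : ℝ} (hab : a ≤ b) (hba : b - a < π) :
    μH[1] (f '' Set.Icc a b) ≤ ENNReal.ofReal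
      (inner ℝ (f b - f a) (unitVec ((a + b) / 2 + π / 2)) / cos ((b - a) / 2)) := by
  rw [inner_sub_left]
  exact hausdorffMeasure_image_Icc_le
    (p := fun x => inner ℝ x (unitVec ((a + b) / 2 + π / 2)))
    (cos_pos_of_mem_Ioo ⟨by linarith, by linarith⟩)
    fun x hx y hy hxy => hf.cos_mul_dist_le_inner_sub hr hba hx.1 hxy hy.2

lemma le_hausdorffMeasure_add_complement (hf : HasTangentBalls r unitVec f) (hr : 0 ≤ r) {a b : ℝ}
    (hab : a ≤ b) :
    ENNReal.ofReal (2 * r * sin ((b - a) / 2)) ≤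
      μH[1] (f '' Set.Icc a b) + μH[1] ((fun θ => r • unitVec θ - f θ) '' Set.Icc a b) := by
  have hdist : ∀ {h : ℝ → EuclideanSpace ℝ (Fin 2)}, HasTangentBalls r unitVec h →
      ENNReal.ofReal ‖h b - h a‖ ≤ μH[1] (h '' Set.Icc a b) := by
    intro h hh
    rw [← dist_eq_norm, ← edist_dist]
    have hcont := hh.continuous hr norm_unitVec continuous_unitVec
    exact edist_le_hausdorffMeasure_of_isPreconnected
      (isPreconnected_Icc.image h hcont.continuousOn)
      (Set.mem_image_of_mem h (Set.right_mem_Icc.2 hab))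
      (Set.mem_image_of_mem h (Set.left_mem_Icc.2 hab))
  refine le_trans ?_ (add_le_add (hdist hf) (hdist hf.complement))
  rw [← ENNReal.ofReal_add (norm_nonneg _) (norm_nonneg _)]
  refine ENNReal.ofReal_le_ofReal ?_
  calc 2 * r * sin ((b - a) / 2)
      = r * inner ℝ (unitVec b - unitVec a) (unitVec ((a + b) / 2 + π / 2)) := by
        rw [inner_unitVec_sub_unitVec]
        ring
    _ ≤ r * ‖unitVec b - unitVec a‖ := by
        refine mul_le_mul_of_nonneg_left ((real_inner_le_norm _ _).trans_eq ?_) hr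
        rw [norm_unitVec, mul_one]
    _ = ‖f b - f a + (r • unitVec b - f b - (r • unitVec a - f a))‖ := by
        rw [← norm_of_nonneg hr, ← norm_smul, norm_of_nonneg hr]
        congr 1
        module
    _ ≤ _ := norm_add_le _ _

lemma hausdorffMeasure_add_complement_le (hf : HasTangentBalls r unitVec f) (hr : 0 < r) {a b : ℝ}
    (hab : a ≤ b) (hba : b - a < π) :
    μH[1] (f '' Set.Icc a b) + μH[1] ((fun θ => r • unitVec θ - f θ) '' Set.Icc a b) ≤
      ENNReal.ofReal (2 * r * tan ((b - a) / 2)) := by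
  have hcos : 0 ≤ cos ((b - a) / 2) := cos_nonneg_of_mem_Icc ⟨by linarith, by linarith⟩
  refine (add_le_add (hf.hausdorffMeasure_image_Icc_le_inner_div_cos hr hab hba)
    (hf.complement.hausdorffMeasure_image_Icc_le_inner_div_cos hr hab hba)).trans_eq ?_
  rw [← ENNReal.ofReal_add (div_nonneg (hf.inner_sub_unitVec_nonneg hr hab hba) hcos)
    (div_nonneg (hf.complement.inner_sub_unitVec_nonneg hr hab hba) hcos), ← add_div,
    ← inner_add_left]
  congr 1
  rw [show f b - f a + (r • unitVec b - f b - (r • unitVec a - f a))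
      = r • (unitVec b - unitVec a) by module, real_inner_smul_left, inner_unitVec_sub_unitVec,
    tan_eq_sin_div_cos]
  ring

lemma exists_hausdorffMeasure_add_complement_eq_sum (hf : HasTangentBalls r unitVec f)
    (hr : 0 ≤ r) {a b : ℝ} (hab : a ≤ b) (hba : b ≤ a + 2 * π) {n : ℕ} (hn : n ≠ 0) :
    ∃ t : ℕ → ℝ, (∀ k, t (k + 1) - t k = (b - a) / n) ∧
      μH[1] (f '' Set.Icc a b) + μH[1] ((fun θ => r • unitVec θ - f θ) '' Set.Icc a b)
        = ∑ k ∈ Finset.range n, (μH[1] (f '' Set.Icc (t k) (t (k + 1)))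
          + μH[1] ((fun θ => r • unitVec θ - f θ) '' Set.Icc (t k) (t (k + 1)))) := by
  obtain ⟨t, ht⟩ : ∃ t : ℕ → ℝ, ∀ k, t k = a + k * ((b - a) / n) := ⟨_, fun _ => rfl⟩
  have hstep : ∀ k, t (k + 1) - t k = (b - a) / n := fun k => by
    rw [ht, ht]
    push_cast
    ring
  have hmono : Monotone t := monotone_nat_of_le_succ fun k => by
    have : 0 ≤ (b - a) / n := div_nonneg (sub_nonneg.2 hab) n.cast_nonneg
    linarith [hstep k]
  have ht0 : t 0 = a := by simp [ht]
  have htn : t n = b := by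
    rw [ht, mul_div_cancel₀ _ (Nat.cast_ne_zero.2 hn), add_sub_cancel]
  refine ⟨t, hstep, ?_⟩
  rw [Finset.sum_add_distrib, hf.sum_hausdorffMeasure_image_Icc hr hmono n (by rwa [ht0, htn]),
    hf.complement.sum_hausdorffMeasure_image_Icc hr hmono n (by rwa [ht0, htn]), ht0, htn]

lemma nat_mul_sin_le_hausdorffMeasure_add_complement (hf : HasTangentBalls r unitVec f)
    (hr : 0 ≤ r) {a b : ℝ} (hab : a ≤ b) (hba : b ≤ a + 2 * π) {n : ℕ} (hn : n ≠ 0) :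
    ENNReal.ofReal (n * (2 * r * sin ((b - a) / n / 2))) ≤
      μH[1] (f '' Set.Icc a b) + μH[1] ((fun θ => r • unitVec θ - f θ) '' Set.Icc a b) := by
  obtain ⟨t, ht, hsum⟩ := hf.exists_hausdorffMeasure_add_complement_eq_sum hr hab hba hn
  have hδ : 0 ≤ (b - a) / n := div_nonneg (sub_nonneg.2 hab) n.cast_nonneg
  rw [hsum, ← nsmul_eq_mul, ENNReal.ofReal_nsmul]
  refine Eq.trans_le (by rw [Finset.card_range]) (Finset.card_nsmul_le_sum _ _ _ fun k _ => ?_)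
  rw [← ht k] at hδ ⊢
  exact hf.le_hausdorffMeasure_add_complement hr (sub_nonneg.1 hδ)

lemma hausdorffMeasure_add_complement_le_nat_mul_tan (hf : HasTangentBalls r unitVec f)
    (hr : 0 < r) {a b : ℝ} (hab : a ≤ b) (hba : b ≤ a + 2 * π) {n : ℕ} (hn : 2 < n) :
    μH[1] (f '' Set.Icc a b) + μH[1] ((fun θ => r • unitVec θ - f θ) '' Set.Icc a b) ≤
      ENNReal.ofReal (n * (2 * r * tan ((b - a) / n / 2))) := by
  obtain ⟨t, ht, hsum⟩ :=
    hf.exists_hausdorffMeasure_add_complement_eq_sum hr.le hab hba (by omega : n ≠ 0)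
  have hδ : 0 ≤ (b - a) / n := div_nonneg (sub_nonneg.2 hab) n.cast_nonneg
  have hδπ : (b - a) / n < π := by
    have hn' : (2 : ℝ) < n := by exact_mod_cast hn
    rw [div_lt_iff₀ (by linarith)]
    nlinarith [pi_pos]
  rw [hsum, ← nsmul_eq_mul, ENNReal.ofReal_nsmul]
  refine (Finset.sum_le_card_nsmul _ _ _ fun k _ => ?_).trans_eq (by rw [Finset.card_range])
  rw [← ht k] at hδ hδπ ⊢
  exact hf.hausdorffMeasure_add_complement_le hr (sub_nonneg.1 hδ) hδπ

lemma hausdorffMeasure_image_Icc_add_complement (hf : HasTangentBalls r unitVec f) (hr : 0 < r)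
    {a b : ℝ} (hab : a ≤ b) (hba : b ≤ a + 2 * π) :
    μH[1] (f '' Set.Icc a b) + μH[1] ((fun θ => r • unitVec θ - f θ) '' Set.Icc a b)
      = ENNReal.ofReal (r * (b - a)) := by
  have hhalf : HasDerivAt (fun y : ℝ => y / 2) (1 / 2) 0 := (hasDerivAt_id 0).div_const 2
  have hsin : HasDerivAt (fun y => 2 * r * sin (y / 2)) r 0 :=
    (hhalf.sin.const_mul (2 * r)).congr_deriv (by rw [zero_div, cos_zero]; ring)
  have htan : HasDerivAt (fun y => 2 * r * tan (y / 2)) r 0 := by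
    have hder : HasDerivAt tan (1 / cos (0 / 2) ^ 2) (0 / 2) := hasDerivAt_tan (by simp)
    exact ((hder.comp 0 hhalf).const_mul (2 * r)).congr_deriv (by rw [zero_div, cos_zero]; ring)
  rw [mul_comm r]
  refine le_antisymm ?_ ?_
  · refine ge_of_tendsto (ENNReal.tendsto_ofReal
      (tendsto_nat_mul_comp_div htan (by simp) (b - a))) ?_
    filter_upwards [eventually_gt_atTop 2] with n hn
    exact hf.hausdorffMeasure_add_complement_le_nat_mul_tan hr hab hba hn
  · refine le_of_tendsto (ENNReal.tendsto_ofReal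
      (tendsto_nat_mul_comp_div hsin (by simp) (b - a))) ?_
    filter_upwards [eventually_ne_atTop 0] with n hn
    exact hf.nat_mul_sin_le_hausdorffMeasure_add_complement hr.le hab hba hn

lemma hausdorffMeasure_range_add_range_sub (hf : HasTangentBalls r unitVec f) (hr : 0 < r) :
    μH[1] (Set.range f) + μH[1] (Set.range fun θ => f θ - r • unitVec θ)
      = ENNReal.ofReal (2 * π * r) := by
  have hneg : μH[1] (Set.range fun θ => f θ - r • unitVec θ)
      = μH[1] (Set.range fun θ => r • unitVec θ - f θ) := by
    rw [← (IsometryEquiv.neg _).hausdorffMeasure_image 1, ← Set.range_comp]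
    simp [Function.comp_def]
  rw [hneg, ← hf.image_Icc_zero_two_pi hr.le, ← hf.complement.image_Icc_zero_two_pi hr.le,
    hf.hausdorffMeasure_image_Icc_add_complement hr two_pi_pos.le (zero_add _).ge, sub_zero,
    mul_comm]

end HasTangentBalls

/-- For a nonempty `r`-disk domain `A ⊆ ℝ²` with `A^r` nonempty, the perimeters of `A` and
`A^r` add up to `2πr`. -/
theorem perimeter_add_perimeter_rDiskDomain {r : ℝ} (hr : 0 < r)
    {X A : Set (EuclideanSpace ℝ (Fin 2))} (hX : X.Nonempty) (hA : A = ballBody r X)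
    (hAne : A.Nonempty) (hArne : (ballBody r A).Nonempty) :
    μH[1] (frontier A) + μH[1] (frontier (ballBody r A)) = ENNReal.ofReal (2 * π * r) := by
  have h : IsBallDual r A (ballBody r A) := hA ▸ isBallDual_biInter_closedBall r X
  have hAc : IsCompact A := h.isCompact_left hArne
  have hBc : IsCompact (ballBody r A) := h.symm.isCompact_left hAne
  choose f hfA hfB using fun θ => h.exists_mem_sub_smul_mem hr hAc hAne (norm_unitVec θ)
  have hfrontierA : frontier A = Set.range f :=
    h.frontier_left_eq_range hr hBc hArne range_unitVec hfA hfB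
  have hfrontierB : frontier (ballBody r A) = Set.range fun θ => f θ - r • unitVec θ :=
    h.frontier_right_eq_range hr hAc hAne range_unitVec hfA hfB
  rw [hfrontierA, hfrontierB]
  exact (h.hasTangentBalls hfA hfB).hausdorffMeasure_range_add_range_sub hr
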